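/- Let N be a positive integer that is not a prime power (i.e. N has at least two distinct prime divisors). Then for the set Ẽ = D(N) \ {1} there exists c ∈ D(N) with a_c(Ẽ) < 0. (If N = p^n is a prime power, then D(N) \ {1} = (p) is again a filter.) -/

import Mathlib

/-!
In terms of `M = N / d` the summands of `a_c` are the Ramanujan sums `c_M(c)`. They are
multiplicative in `M`, and on the powers of a prime their sums telescope, so `∑_{M ∣ N} c_M(c)`
equals `N` if `N ∣ c` and `0` otherwise. Removing `d = 1` removes the summand `c_N(c)`, which has
the sign of `μ(N / c)` when `c ∣ N`. For distinct primes `p, q` dividing `N` the choice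
`c = N / (p q)` makes the full sum vanish and the removed summand positive, since `μ(p q) = 1`.
-/

open Finset

/-- `a_c(E) = ∑_{d ∈ E} (φ(N/d)/φ(N/gcd(N,dc))) · μ(N/gcd(N,dc))`. -/
noncomputable def acSum (N : ℕ) (E : Finset ℕ) (c : ℕ) : ℚ :=
  ∑ d ∈ E, ((Nat.totient (N / d) : ℚ) / (Nat.totient (N / N.gcd (d * c)) : ℚ)) *
    ((ArithmeticFunction.moebius (N / N.gcd (d * c)) : ℤ) : ℚ)

section

open ArithmeticFunction
open scoped ArithmeticFunction.Moebius ArithmeticFunction.zeta Nat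

/-- The Ramanujan sum `c_M(c)`, the sum of the `c`-th powers of the primitive `M`-th roots of unity,
as an arithmetic function of `M`. It is encoded by Hölder's formula instead of roots of unity, so
that its values are visibly the summands of `acSum`. -/
noncomputable def ramanujanSum (c : ℕ) : ArithmeticFunction ℚ where
  toFun M := (φ M / φ (M / M.gcd c) : ℚ) * μ (M / M.gcd c)
  map_zero' := by simp

lemma ramanujanSum_apply (c M : ℕ) :
    ramanujanSum c M = (φ M / φ (M / M.gcd c) : ℚ) * μ (M / M.gcd c) := rfl

lemma ramanujanSum_pos_iff {c M : ℕ} : 0 < ramanujanSum c M ↔ 0 < μ (M / M.gcd c) := by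
  rcases M.eq_zero_or_pos with rfl | hM
  · simp
  have hquot : 0 < M / M.gcd c := Nat.div_gcd_pos_of_pos_left c hM
  have hratio : (0 : ℚ) < φ M / φ (M / M.gcd c) :=
    div_pos (mod_cast Nat.totient_pos.mpr hM) (mod_cast Nat.totient_pos.mpr hquot)
  rw [ramanujanSum_apply, mul_pos_iff_of_pos_left hratio, Int.cast_pos]

lemma isMultiplicative_ramanujanSum (c : ℕ) : (ramanujanSum c).IsMultiplicative := by
  refine ⟨by simp [ramanujanSum_apply], fun {m n} hmn => ?_⟩
  have hquot : m * n / (m * n).gcd c = m / m.gcd c * (n / n.gcd c) := by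
    rw [Nat.gcd_comm, hmn.gcd_mul c, Nat.gcd_comm c m, Nat.gcd_comm c n,
      Nat.div_mul_div_comm (Nat.gcd_dvd_left m c) (Nat.gcd_dvd_left n c)]
  have hcop : (m / m.gcd c).Coprime (n / n.gcd c) :=
    hmn.of_dvd (Nat.div_dvd_of_dvd (Nat.gcd_dvd_left m c))
      (Nat.div_dvd_of_dvd (Nat.gcd_dvd_left n c))
  simp only [ramanujanSum_apply, hquot, Nat.totient_mul hmn, Nat.totient_mul hcop,
    isMultiplicative_moebius.map_mul_of_coprime hcop]
  push_cast
  ring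

lemma ramanujanSum_prime_pow_succ {p : ℕ} (hp : p.Prime) (c k : ℕ) :
    ramanujanSum c (p ^ (k + 1)) =
      (if p ^ (k + 1) ∣ c then (p : ℚ) ^ (k + 1) else 0) -
        (if p ^ k ∣ c then (p : ℚ) ^ k else 0) := by
  obtain ⟨j, hj, hgcd⟩ := (Nat.dvd_prime_pow hp).mp (Nat.gcd_dvd_left (p ^ (k + 1)) c)
  have hdvd {i : ℕ} (hi : i ≤ k + 1) : p ^ i ∣ c ↔ i ≤ j := by
    rw [← Nat.pow_dvd_pow_iff_le_right hp.one_lt, ← hgcd, Nat.dvd_gcd_iff,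
      and_iff_right (pow_dvd_pow p hi)]
  have hφ : (φ (p ^ (k + 1)) : ℚ) = p ^ k * (p - 1) := by
    rw [Nat.totient_prime_pow_succ hp, Nat.cast_mul, Nat.cast_pow, Nat.cast_pred hp.pos]
  rw [ramanujanSum_apply, hgcd, Nat.pow_div hj hp.pos, hφ]
  simp only [hdvd le_rfl, hdvd k.le_succ]
  obtain rfl | rfl | hlt : j = k + 1 ∨ j = k ∨ j < k := by lia
  · simp [pow_succ, mul_sub]
  · have hp1 : (p : ℚ) - 1 ≠ 0 := sub_ne_zero.mpr (mod_cast hp.ne_one)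
    simp [Nat.totient_prime hp, moebius_apply_prime hp, Nat.cast_pred hp.pos, hp1]
  · have hμ : μ (p ^ (k + 1 - j)) = 0 := by
      rw [moebius_apply_prime_pow hp (by lia), if_neg (by lia)]
    simp [hμ, hlt, show ¬ k + 1 ≤ j by lia]

lemma sum_divisors_prime_pow_ramanujanSum {p : ℕ} (hp : p.Prime) (c k : ℕ) :
    ∑ M ∈ (p ^ k).divisors, ramanujanSum c M = if p ^ k ∣ c then (p : ℚ) ^ k else 0 := by
  rw [Nat.sum_divisors_prime_pow hp, sum_range_succ']
  simp only [ramanujanSum_prime_pow_succ hp, pow_zero]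
  rw [sum_range_sub (fun i => if p ^ i ∣ c then (p : ℚ) ^ i else 0),
    (isMultiplicative_ramanujanSum c).map_one]
  simp

lemma sum_divisors_ramanujanSum (c N : ℕ) :
    ∑ M ∈ N.divisors, ramanujanSum c M = if N ∣ c then (N : ℚ) else 0 := by
  induction N using Nat.recOnPrimeCoprime with
  | zero => simp
  | prime_pow p k hp => exact_mod_cast sum_divisors_prime_pow_ramanujanSum hp c k
  | coprime m n _ _ hmn ihm ihn =>
    have hmul := (isMultiplicative_ramanujanSum c).mul (isMultiplicative_zeta.natCast (R := ℚ))
    have hdvd : m * n ∣ c ↔ m ∣ c ∧ n ∣ c :=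
      ⟨fun h => ⟨dvd_of_mul_right_dvd h, dvd_of_mul_left_dvd h⟩,
        fun h => hmn.mul_dvd_of_dvd_of_dvd h.1 h.2⟩
    rw [← coe_mul_zeta_apply, hmul.map_mul_of_coprime hmn, coe_mul_zeta_apply, coe_mul_zeta_apply,
      ihm, ihn, ite_zero_mul_ite_zero, Nat.cast_mul]
    simp only [hdvd]

lemma acSum_eq_sum_ramanujanSum {N : ℕ} {E : Finset ℕ} (hE : E ⊆ N.divisors) (c : ℕ) :
    acSum N E c = ∑ d ∈ E, ramanujanSum c (N / d) := by
  refine sum_congr rfl fun d hd => ?_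
  have hd_pos : 0 < d := Nat.pos_of_mem_divisors (hE hd)
  obtain ⟨M, rfl⟩ := Nat.dvd_of_mem_divisors (hE hd)
  rw [ramanujanSum_apply, Nat.gcd_mul_left, Nat.mul_div_cancel_left M hd_pos,
    Nat.mul_div_mul_left M _ hd_pos]

lemma acSum_divisors_erase_one {N : ℕ} (hN : N ≠ 0) (c : ℕ) :
    acSum N (N.divisors.erase 1) c = (if N ∣ c then (N : ℚ) else 0) - ramanujanSum c N := by
  rw [acSum_eq_sum_ramanujanSum (erase_subset 1 N.divisors),
    sum_erase_eq_sub (Nat.one_mem_divisors.mpr hN), Nat.sum_div_divisors, Nat.div_one,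
    sum_divisors_ramanujanSum]

lemma moebius_mul_of_primes_ne {p q : ℕ} (hp : p.Prime) (hq : q.Prime) (hpq : p ≠ q) :
    μ (p * q) = 1 := by
  rw [isMultiplicative_moebius.map_mul_of_coprime ((Nat.coprime_primes hp hq).mpr hpq),
    moebius_apply_prime hp, moebius_apply_prime hq, neg_one_mul, neg_neg]

end

/-- If `N` is not a prime power, i.e. it has at least two distinct prime divisors, then
for the set `Ẽ = D(N) \ {1}` of nontrivial divisors of `N` some `a_c(Ẽ)` with `c ∣ N`
is negative. -/
theorem acSum_neg_of_divisors_erase_one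
    (N : ℕ) (hN : 0 < N)
    (hnp : ∃ p q : ℕ, p.Prime ∧ q.Prime ∧ p ≠ q ∧ p ∣ N ∧ q ∣ N) :
    ∃ c ∈ N.divisors, acSum N (N.divisors.erase 1) c < 0 := by
  obtain ⟨p, q, hp, hq, hpq, hpN, hqN⟩ := hnp
  obtain ⟨c, rfl⟩ : p * q ∣ N :=
    ((Nat.coprime_primes hp hq).mpr hpq).mul_dvd_of_dvd_of_dvd hpN hqN
  have hc : 0 < c := Nat.pos_of_mul_pos_left hN
  have hcN : c ∣ p * q * c := dvd_mul_left c (p * q)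
  have hNc : ¬ p * q * c ∣ c :=
    Nat.not_dvd_of_pos_of_lt hc (lt_mul_of_one_lt_left hc (one_lt_mul'' hp.one_lt hq.one_lt))
  have hpos : 0 < ramanujanSum c (p * q * c) := by
    rw [ramanujanSum_pos_iff, Nat.gcd_eq_right hcN, Nat.mul_div_cancel _ hc,
      moebius_mul_of_primes_ne hp hq hpq]
    exact one_pos
  refine ⟨c, Nat.mem_divisors.mpr ⟨hcN, hN.ne'⟩, ?_⟩
  rw [acSum_divisors_erase_one hN.ne', if_neg hNc, zero_sub]
  exact neg_neg_of_pos hpos
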